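/- Consider the consensus-voting group process on the unit square ℍ = [0,1]². Then there exists a constant C > 0 such that for every T ≥ 3, the expected group size after T rounds satisfies E[|G^T|] ≤ C·ln(T)·ln(ln(T)). -/

import Mathlib

open MeasureTheory Metric Set
open scoped RealInnerProductSpace ENNReal

noncomputable section

/-- Points of the plane (with the Euclidean norm). -/
abbrev Pt : Type := EuclideanSpace ℝ (Fin 2)

/-- The Voronoi cell of `w₁` (against competitor `w₂`) inside `K`. -/
def vcell (K : Set Pt) (w₁ w₂ : Pt) : Set Pt := {v ∈ K | dist v w₁ ≤ dist v w₂}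

/-- The acceptance event `E_K(H, A)`: the set of candidate pairs `(w₁, w₂) ∈ K × K` such
that some candidate `wᵢ` lies in `H` and `A` is contained in its Voronoi cell, i.e. a
candidate inside `H` is accepted when the convex hull of the group is `A`. -/
def accEvent (K H A : Set Pt) : Set (Pt × Pt) :=
  {p | p.1 ∈ K ∧ p.2 ∈ K ∧
    ((p.1 ∈ H ∧ A ⊆ vcell K p.1 p.2) ∨ (p.2 ∈ H ∧ A ⊆ vcell K p.2 p.1))}

/-- Every group member weakly prefers candidate `w₁` to candidate `w₂`. -/
def Accepts (G : Set Pt) (w₁ w₂ : Pt) : Prop := ∀ v ∈ G, dist v w₁ ≤ dist v w₂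

open Classical in
/-- One round of the consensus-voting process: given the current group `G` and a pair of
candidates `c = (w₁, w₂)`, the unanimously preferred candidate (if any) joins the group. -/
def step (G : Set Pt) (c : Pt × Pt) : Set Pt :=
  if Accepts G c.1 c.2 then insert c.1 G
  else if Accepts G c.2 c.1 then insert c.2 G
  else G

/-- The group after `t` rounds, from initial members `init` and candidate pairs `c`. -/
def grp {k : ℕ} (init : Fin k → Pt) (c : ℕ → Pt × Pt) : ℕ → Set Pt
  | 0 => Set.range init
  | t + 1 => step (grp init c t) (c t)

/-- Extend a `Fin T`-indexed sequence of candidate pairs to an `ℕ`-indexed one. -/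
def extSeq {T : ℕ} (c : Fin T → Pt × Pt) : ℕ → Pt × Pt :=
  fun n => if h : n < T then c ⟨n, h⟩ else 0

/-- The law of the randomness driving the first `T` rounds of the process: `k` i.i.d.
initial members with law `μ`, and `T` i.i.d. candidate pairs, each pair being two i.i.d.
points with law `μ`. -/
def procMeasure (μ : Measure Pt) (k T : ℕ) :
    Measure ((Fin k → Pt) × (Fin T → Pt × Pt)) :=
  (Measure.pi fun _ => μ).prod (Measure.pi fun _ => μ.prod μ)


/-- The unit square `[0,1]²` in the plane. -/
def unitSquare : Set Pt := {x : Pt | ∀ i, x i ∈ Set.Icc (0 : ℝ) 1}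


/-- Lebesgue measure on the unit square in coordinates. -/
def nu : Measure (ℝ × ℝ) :=
  (volume.restrict (Icc (0:ℝ) 1)).prod (volume.restrict (Icc (0:ℝ) 1))

instance nu_prob : IsProbabilityMeasure nu := by
  have : IsProbabilityMeasure (volume.restrict (Icc (0:ℝ) 1)) := ⟨by simp⟩
  unfold nu; infer_instance

/-- Coordinate systems adapted to the symmetries of the square. -/
structure Good (φ : Pt → ℝ × ℝ) : Prop where
  mp : MeasurePreserving φ (volume.restrict unitSquare) nu
  dst : ∀ v w, dist v w ^ 2 = ((φ v).1 - (φ w).1) ^ 2 + ((φ v).2 - (φ w).2) ^ 2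
  mem : ∀ v ∈ unitSquare, 0 ≤ (φ v).1 ∧ (φ v).1 ≤ 1 ∧ 0 ≤ (φ v).2 ∧ (φ v).2 ≤ 1

lemma good_base : Good (fun p : Pt => (p 0, p 1)) := by
  refine ⟨?_, ?_, ?_⟩
  · have h1 : MeasurePreserving (fun p : Pt => (p 0, p 1)) volume volume :=
      (volume_preserving_finTwoArrow ℝ).comp (EuclideanSpace.volume_preserving_symm_measurableEquiv_toLp (Fin 2))
    have h2 := h1.restrict_preimage (s := Icc (0:ℝ) 1 ×ˢ Icc (0:ℝ) 1)
      (measurableSet_Icc.prod measurableSet_Icc)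
    have h3 : (fun p : Pt => (p 0, p 1)) ⁻¹' (Icc (0:ℝ) 1 ×ˢ Icc (0:ℝ) 1) = unitSquare := by
      ext p; simp [unitSquare, Fin.forall_fin_two]; tauto
    rw [h3] at h2
    unfold nu
    rw [Measure.prod_restrict]
    exact h2
  · intro v w
    rw [EuclideanSpace.dist_eq, Real.sq_sqrt (by positivity)]
    simp [Fin.sum_univ_two, Real.dist_eq, sq_abs]
  · intro v hv
    have h0 := hv 0
    have h1 := hv 1
    exact ⟨h0.1, h0.2, h1.1, h1.2⟩

lemma Good.swp {φ : Pt → ℝ × ℝ} (h : Good φ) : Good (fun p => ((φ p).2, (φ p).1)) := by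
  refine ⟨?_, ?_, ?_⟩
  · exact (Measure.measurePreserving_swap (μ := volume.restrict (Icc (0:ℝ) 1))
      (ν := volume.restrict (Icc (0:ℝ) 1))).comp h.mp
  · intro v w; rw [h.dst]; ring
  · intro v hv
    obtain ⟨a, b, c, d⟩ := h.mem v hv
    exact ⟨c, d, a, b⟩

lemma flip_mp : MeasurePreserving (fun x : ℝ => 1 - x) (volume.restrict (Icc (0:ℝ) 1))
    (volume.restrict (Icc (0:ℝ) 1)) := by
  have h := (Measure.measurePreserving_sub_left (volume : Measure ℝ) (1:ℝ)).restrict_preimage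
    (s := Icc (0:ℝ) 1) measurableSet_Icc
  have h3 : (fun x : ℝ => 1 - x) ⁻¹' (Icc (0:ℝ) 1) = Icc (0:ℝ) 1 := by
    ext x; simp
  rwa [h3] at h

lemma Good.flip1 {φ : Pt → ℝ × ℝ} (h : Good φ) : Good (fun p => (1 - (φ p).1, (φ p).2)) := by
  refine ⟨?_, ?_, ?_⟩
  · exact (flip_mp.prod (MeasurePreserving.id _)).comp h.mp
  · intro v w; rw [h.dst]; ring
  · intro v hv
    obtain ⟨a, b, c, d⟩ := h.mem v hv
    refine ⟨?_, ?_, c, d⟩ <;> simp only <;> linarith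

lemma Good.flip2 {φ : Pt → ℝ × ℝ} (h : Good φ) : Good (fun p => ((φ p).1, 1 - (φ p).2)) :=
  h.swp.flip1.swp

/-- The eight coordinate systems. -/
def cs (σ : Bool × Bool × Bool) (p : Pt) : ℝ × ℝ :=
  let q : ℝ × ℝ := if σ.2.2 then (p 1, p 0) else (p 0, p 1)
  (if σ.1 then 1 - q.1 else q.1, if σ.2.1 then 1 - q.2 else q.2)

lemma cs_good (σ : Bool × Bool × Bool) : Good (cs σ) := by
  obtain ⟨x, y, z⟩ := σ
  cases x <;> cases y <;> cases z
  · exact good_base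
  · exact good_base.swp
  · exact good_base.flip2
  · exact good_base.swp.flip2
  · exact good_base.flip1
  · exact good_base.swp.flip1
  · exact good_base.flip1.flip2
  · exact good_base.swp.flip1.flip2

lemma octant (w₁ w₂ : Pt) : ∃ σ, 0 ≤ (cs σ w₁).2 - (cs σ w₂).2 ∧
    (cs σ w₁).2 - (cs σ w₂).2 ≤ (cs σ w₁).1 - (cs σ w₂).1 := by
  rcases le_total (|w₁ 1 - w₂ 1|) (|w₁ 0 - w₂ 0|) with h | h <;>
  rcases le_total (w₁ 1) (w₂ 1) with h1 | h1 <;>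
  rcases le_total (w₁ 0) (w₂ 0) with h0 | h0 <;>
  simp only [abs_of_nonneg, abs_of_nonpos, sub_nonneg, sub_nonpos, h0, h1] at h
  · exact ⟨(true, true, false), by simp [cs]; constructor <;> linarith⟩
  · exact ⟨(false, true, false), by simp [cs]; constructor <;> linarith⟩
  · exact ⟨(true, false, false), by simp [cs]; constructor <;> linarith⟩
  · exact ⟨(false, false, false), by simp [cs]; constructor <;> linarith⟩
  · exact ⟨(true, true, true), by simp [cs]; constructor <;> linarith⟩
  · exact ⟨(true, false, true), by simp [cs]; constructor <;> linarith⟩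
  · exact ⟨(false, true, true), by simp [cs]; constructor <;> linarith⟩
  · exact ⟨(false, false, true), by simp [cs]; constructor <;> linarith⟩

/-- The scale `2^{-j}`. -/
def e (j : ℕ) : ℝ := (1 / 2) ^ j

lemma e_pos (j : ℕ) : 0 < e j := by unfold e; positivity
lemma e_le_one (j : ℕ) : e j ≤ 1 := by unfold e; exact pow_le_one₀ (by norm_num) (by norm_num)
lemma e_succ (j : ℕ) : e (j + 1) = e j / 2 := by unfold e; rw [pow_succ]; ring
lemma e_anti {i j : ℕ} (h : i ≤ j) : e j ≤ e i := by
  unfold e; exact pow_le_pow_of_le_one (by norm_num) (by norm_num) h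

/-- Region containing all accepted pairs of scale `j`. -/
def U (j : ℕ) (h : ℝ) : Set ((ℝ × ℝ) × (ℝ × ℝ)) :=
  {p | p.1.1 ≤ 2 * h ∧ p.2.1 ≤ 2 * h ∧ p.1.2 * e j ≤ 4 * h ∧
    p.1.2 - 2 * e j * h ≤ p.2.2 ∧ p.2.2 ≤ p.1.2}

/-- Region of nearly horizontal pairs. -/
def Tl (J : ℕ) : Set ((ℝ × ℝ) × (ℝ × ℝ)) :=
  {p | p.1.2 - e J ≤ p.2.2 ∧ p.2.2 ≤ p.1.2}

/-- Elementary region of good pairs. -/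
def Bx (i : ℕ) (h : ℝ) : Set ((ℝ × ℝ) × (ℝ × ℝ)) :=
  {p | 0 ≤ p.2.1 ∧ p.2.1 ≤ h / 32 ∧ 0 ≤ p.2.2 ∧ p.2.2 ≤ 1 / 2 ∧ p.2.2 * e i ≤ h / 32 ∧
    5 * h / 32 ≤ p.1.1 ∧ p.1.1 ≤ 6 * h / 32 ∧
    p.2.2 + 3 * e i * h / 32 < p.1.2 ∧ p.1.2 ≤ p.2.2 + 4 * e i * h / 32}

/-- Weight of scale `j`. -/
def g (j : ℕ) (h : ℝ) : ℝ := h ^ 3 * min (e j) h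

lemma meas_U (j : ℕ) (h : ℝ) : MeasurableSet (U j h) := by
  unfold U
  simp only [ofPred_and]
  repeat' apply MeasurableSet.inter
  all_goals exact measurableSet_le (by fun_prop) (by fun_prop)

lemma meas_Tl (j : ℕ) : MeasurableSet (Tl j) := by
  unfold Tl
  simp only [ofPred_and]
  repeat' apply MeasurableSet.inter
  all_goals exact measurableSet_le (by fun_prop) (by fun_prop)

lemma meas_Bx (j : ℕ) (h : ℝ) : MeasurableSet (Bx j h) := by
  unfold Bx
  simp only [ofPred_and]
  repeat' apply MeasurableSet.inter
  all_goals first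
    | exact measurableSet_le (by fun_prop) (by fun_prop)
    | exact measurableSet_lt (by fun_prop) (by fun_prop)

lemma prod_le {S : Set ((ℝ × ℝ) × (ℝ × ℝ))} (hS : MeasurableSet S) {B : Set (ℝ × ℝ)}
    (hB : MeasurableSet B) {κ : ℝ≥0∞} (h1 : ∀ p ∈ S, p.1 ∈ B)
    (h2 : ∀ x ∈ B, nu (Prod.mk x ⁻¹' S) ≤ κ) : (nu.prod nu) S ≤ nu B * κ := by
  rw [Measure.prod_apply hS]
  calc ∫⁻ x, nu (Prod.mk x ⁻¹' S) ∂nu ≤ ∫⁻ x, B.indicator (fun _ => κ) x ∂nu := by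
        apply lintegral_mono
        intro x
        by_cases hx : x ∈ B
        · simp [hx, h2 x hx]
        · have : Prod.mk x ⁻¹' S = ∅ := by
            ext y; simp only [mem_preimage, mem_empty_iff_false, iff_false]
            intro hy; exact hx (h1 _ hy)
          simp [this]
    _ = nu B * κ := by rw [lintegral_indicator hB]; simp [mul_comm]

lemma le_prod {S : Set ((ℝ × ℝ) × (ℝ × ℝ))} (hS : MeasurableSet S) {B : Set (ℝ × ℝ)}
    (hB : MeasurableSet B) {κ : ℝ≥0∞}
    (h2 : ∀ y ∈ B, κ ≤ nu ((fun x => (x, y)) ⁻¹' S)) : nu B * κ ≤ (nu.prod nu) S := by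
  rw [Measure.prod_apply_symm hS]
  calc nu B * κ = ∫⁻ x, B.indicator (fun _ => κ) x ∂nu := by
        rw [lintegral_indicator hB]; simp [mul_comm]
    _ ≤ _ := by
        apply lintegral_mono
        intro x
        by_cases hx : x ∈ B
        · simp [hx, h2 x hx]
        · simp [hx]

lemma nu_box_le (a b c d : ℝ) :
    nu (Icc a b ×ˢ Icc c d) ≤ ENNReal.ofReal (b - a) * ENNReal.ofReal (d - c) := by
  unfold nu
  rw [Measure.prod_prod]
  gcongr
  · exact (Measure.restrict_apply_le _ _).trans (by simp)
  · exact (Measure.restrict_apply_le _ _).trans (by simp)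

lemma nu_box_eq {a b c d : ℝ} (ha : 0 ≤ a) (hb : b ≤ 1) (hc : 0 ≤ c) (hd : d ≤ 1) :
    nu (Icc a b ×ˢ Ioc c d) = ENNReal.ofReal (b - a) * ENNReal.ofReal (d - c) := by
  unfold nu
  rw [Measure.prod_prod, Measure.restrict_eq_self _ (Icc_subset_Icc ha hb),
    Measure.restrict_eq_self _ (Ioc_subset_Icc_self.trans (Icc_subset_Icc hc hd))]
  simp

lemma nu_box_eq' {a b c d : ℝ} (ha : 0 ≤ a) (hb : b ≤ 1) (hc : 0 ≤ c) (hd : d ≤ 1) :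
    nu (Icc a b ×ˢ Icc c d) = ENNReal.ofReal (b - a) * ENNReal.ofReal (d - c) := by
  unfold nu
  rw [Measure.prod_prod, Measure.restrict_eq_self _ (Icc_subset_Icc ha hb),
    Measure.restrict_eq_self _ (Icc_subset_Icc hc hd)]
  simp

lemma ae_nu : ∀ᵐ p ∂nu, (0 ≤ p.1 ∧ p.1 ≤ 1) ∧ (0 ≤ p.2 ∧ p.2 ≤ 1) := by
  have h : nu = (volume : Measure (ℝ × ℝ)).restrict (Icc (0:ℝ) 1 ×ˢ Icc (0:ℝ) 1) := by
    unfold nu; rw [Measure.prod_restrict]; rfl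
  rw [h]
  filter_upwards [ae_restrict_mem (measurableSet_Icc.prod measurableSet_Icc)] with p hp
  exact ⟨hp.1, hp.2⟩

lemma nu_inter (S : Set (ℝ × ℝ)) : nu S = nu (S ∩ (Icc 0 1 ×ˢ Icc 0 1)) := by
  apply measure_congr
  filter_upwards [ae_nu] with p hp
  apply propext
  constructor
  · intro h; exact ⟨h, hp.1, hp.2⟩
  · intro h; exact h.1

lemma nn_inter (S : Set ((ℝ × ℝ) × (ℝ × ℝ))) : (nu.prod nu) S =
    (nu.prod nu) (S ∩ ((Icc 0 1 ×ˢ Icc 0 1) ×ˢ univ)) := by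
  apply measure_congr
  have : ∀ᵐ q ∂(nu.prod nu), (0 ≤ q.1.1 ∧ q.1.1 ≤ 1) ∧ (0 ≤ q.1.2 ∧ q.1.2 ≤ 1) :=
    Measure.quasiMeasurePreserving_fst.ae ae_nu
  filter_upwards [this] with p hp
  apply propext
  constructor
  · intro h; exact ⟨h, ⟨hp.1, hp.2⟩, trivial⟩
  · intro h; exact h.1

lemma U_le (j : ℕ) {h : ℝ} (h0 : 0 ≤ h) : (nu.prod nu).real (U j h) ≤ 32 * g j h := by
  have he := e_pos j
  apply ENNReal.toReal_le_of_le_ofReal (by unfold g; positivity)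
  rw [nn_inter]
  refine (prod_le (B := Icc 0 (2 * h) ×ˢ Icc 0 (min 1 (4 * h / e j)))
    (κ := ENNReal.ofReal (2 * h - 0) * ENNReal.ofReal (2 * e j * h))
    ((meas_U j h).inter (by measurability)) (by measurability) ?_ ?_).trans ?_
  · rintro p ⟨hp, hq, -⟩
    obtain ⟨a, b, c, d, f⟩ := hp
    refine ⟨⟨hq.1.1, a⟩, hq.2.1, le_min hq.2.2 ?_⟩
    rw [le_div_iff₀ he]; exact c
  · intro x hx
    rw [nu_inter]
    refine (measure_mono (t := Icc 0 (2 * h) ×ˢ Icc (x.2 - 2 * e j * h) x.2) ?_).trans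
      ((nu_box_le _ _ _ _).trans (by ring_nf; rfl))
    rintro y ⟨⟨hy, -⟩, hz⟩
    obtain ⟨a, b, c, d, f⟩ := hy
    exact ⟨⟨hz.1.1, b⟩, d, f⟩
  · refine (mul_le_mul_left (nu_box_le _ _ _ _) _).trans ?_
    have hm : 0 ≤ min 1 (4 * h / e j) := by positivity
    rw [← ENNReal.ofReal_mul (by linarith), ← ENNReal.ofReal_mul (by linarith),
      ← ENNReal.ofReal_mul (by simp only [sub_zero]; positivity)]
    apply ENNReal.ofReal_le_ofReal
    have : min 1 (4 * h / e j) * e j ≤ 4 * min (e j) h := by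
      rw [min_mul_of_nonneg _ _ he.le, div_mul_cancel₀ _ he.ne', mul_min_of_nonneg _ _ (by norm_num)]
      apply min_le_min _ le_rfl; linarith
    unfold g
    calc _ = 8 * h ^ 3 * (min 1 (4 * h / e j) * e j) := by ring
      _ ≤ 8 * h ^ 3 * (4 * min (e j) h) := by gcongr
      _ = _ := by ring

lemma Tl_le (J : ℕ) : (nu.prod nu).real (Tl J) ≤ e J := by
  apply ENNReal.toReal_le_of_le_ofReal (e_pos J).le
  refine (prod_le (B := univ) (κ := ENNReal.ofReal (e J)) (meas_Tl J) MeasurableSet.univ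
    (by simp) ?_).trans (by simp)
  intro x _
  rw [nu_inter]
  refine (measure_mono (t := Icc 0 1 ×ˢ Icc (x.2 - e J) x.2) ?_).trans
      ((nu_box_le _ _ _ _).trans (by simp))
  rintro y ⟨hy, hz⟩
  exact ⟨hz.1, hy⟩

lemma Bx_ge (i : ℕ) {h : ℝ} (h0 : 0 ≤ h) (h2 : h ≤ 2) :
    (1 / 32) ^ 4 * g i h ≤ (nu.prod nu).real (Bx i h) := by
  have he := e_pos i
  have he1 := e_le_one i
  have heh : e i * h ≤ 2 := by nlinarith
  have heh0 : 0 ≤ e i * h := by positivity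
  have hm : 0 ≤ min (1 / 2) (h / 32 / e i) := by positivity
  rw [Measure.real, ← ENNReal.ofReal_le_iff_le_toReal (measure_ne_top _ _)]
  refine le_trans ?_ (le_prod (B := Icc 0 (h / 32) ×ˢ Icc 0 (min (1 / 2) (h / 32 / e i)))
    (κ := ENNReal.ofReal (h / 32) * ENNReal.ofReal (e i * h / 32))
    (meas_Bx i h) (by measurability) ?_)
  · rw [nu_box_eq' le_rfl (by linarith) le_rfl ((min_le_left _ _).trans (by norm_num)),
      ← ENNReal.ofReal_mul (by linarith), ← ENNReal.ofReal_mul (by linarith),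
      ← ENNReal.ofReal_mul (by simp only [sub_zero]; positivity)]
    apply ENNReal.ofReal_le_ofReal
    have : min (e i) h / 32 ≤ min (1 / 2) (h / 32 / e i) * e i := by
      rw [min_mul_of_nonneg _ _ he.le, div_mul_cancel₀ _ he.ne']
      apply le_min
      · have := min_le_left (e i) h; linarith
      · have := min_le_right (e i) h; linarith
    unfold g
    calc _ = (h / 32) ^ 3 * (min (e i) h / 32) := by ring
      _ ≤ (h / 32) ^ 3 * (min (1 / 2) (h / 32 / e i) * e i) := by gcongr
      _ = _ := by ring
  · rintro y ⟨hy1, hy2⟩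
    have hy3 := hy2.2.trans (min_le_left _ _)
    have hy4 := hy2.2.trans (min_le_right _ _)
    rw [le_div_iff₀ he] at hy4
    have hy0 := hy2.1
    have := nu_box_eq (a := 5 * h / 32) (b := 6 * h / 32) (c := y.2 + 3 * e i * h / 32)
      (d := y.2 + 4 * e i * h / 32) (by positivity) (by linarith) (by positivity) (by nlinarith)
    refine le_trans (le_of_eq ?_) (this.symm.le.trans (measure_mono ?_))
    · congr 2 <;> ring
    · rintro x ⟨hx1, hx2⟩
      exact ⟨hy1.1, hy1.2, hy2.1, hy3, hy4, hx1.1, hx1.2, hx2.1, hx2.2⟩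

/-- Good pairs for scale `j`. -/
def Bu (j : ℕ) (h : ℝ) : Set ((ℝ × ℝ) × (ℝ × ℝ)) := ⋃ i ∈ Finset.range (j + 1), Bx i h

lemma meas_Bu (j : ℕ) (h : ℝ) : MeasurableSet (Bu j h) :=
  Finset.measurableSet_biUnion _ fun i _ => meas_Bx i h

lemma Bx_disj (h : ℝ) {i j : ℕ} (hij : i < j) : Disjoint (Bx i h) (Bx j h) := by
  rw [Set.disjoint_left]
  rintro p ⟨a, b, c, d, e1, f, k, l, m⟩ ⟨a', b', c', d', e', f', k', l', m'⟩
  have h1 := e_anti (Nat.succ_le_of_lt hij)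
  rw [Nat.succ_eq_add_one, e_succ] at h1
  have h0 : 0 ≤ h := by linarith
  have := e_pos i
  nlinarith [mul_le_mul_of_nonneg_right h1 h0, mul_nonneg this.le h0]

lemma Bu_ge (j : ℕ) {h : ℝ} (h0 : 0 ≤ h) (h2 : h ≤ 2) :
    (1 / 32) ^ 4 * ((j + 1) * g j h) ≤ (nu.prod nu).real (Bu j h) := by
  unfold Bu
  rw [measureReal_biUnion_finset ?_ (fun i _ => meas_Bx i h)]
  · calc (1 / 32) ^ 4 * ((j + 1) * g j h)
        = ∑ i ∈ Finset.range (j + 1), (1 / 32) ^ 4 * g j h := by simp; ring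
      _ ≤ _ := by
        apply Finset.sum_le_sum
        intro i hi
        refine le_trans ?_ (Bx_ge i h0 h2)
        have := e_anti (Nat.lt_succ_iff.mp (Finset.mem_range.mp hi))
        unfold g
        gcongr
  · intro i _ j _ hij
    rcases lt_or_gt_of_ne hij with h' | h'
    · exact Bx_disj h h'
    · exact (Bx_disj h h').symm

/-- The extent of `G` at scale `j` in coordinates `φ`. -/
def hh (φ : Pt → ℝ × ℝ) (j : ℕ) (G : Set Pt) : ℝ :=
  sInf ((fun v => (φ v).1 + e j * (φ v).2) '' G)

/-- Admissible groups. -/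
structure Adm (G : Set Pt) : Prop where
  fin : G.Finite
  ne : G.Nonempty
  sub : G ⊆ unitSquare

lemma hh_le {φ : Pt → ℝ × ℝ} {j : ℕ} {G : Set Pt} (hG : Adm G) {v : Pt} (hv : v ∈ G) :
    hh φ j G ≤ (φ v).1 + e j * (φ v).2 :=
  csInf_le (hG.fin.image _).bddBelow ⟨v, hv, rfl⟩

lemma hh_att (φ : Pt → ℝ × ℝ) (j : ℕ) {G : Set Pt} (hG : Adm G) :
    ∃ v ∈ G, (φ v).1 + e j * (φ v).2 = hh φ j G :=
  (hG.ne.image _).csInf_mem (hG.fin.image _)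

lemma hh_nonneg {φ : Pt → ℝ × ℝ} (hφ : Good φ) (j : ℕ) {G : Set Pt} (hG : Adm G) :
    0 ≤ hh φ j G := by
  obtain ⟨v, hv, h⟩ := hh_att φ j hG
  obtain ⟨a, b, c, d⟩ := hφ.mem v (hG.sub hv)
  have := e_pos j
  rw [← h]; positivity

lemma hh_le_two {φ : Pt → ℝ × ℝ} (hφ : Good φ) (j : ℕ) {G : Set Pt} (hG : Adm G) :
    hh φ j G ≤ 2 := by
  obtain ⟨v, hv, h⟩ := hh_att φ j hG
  obtain ⟨a, b, c, d⟩ := hφ.mem v (hG.sub hv)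
  have := e_pos j
  have := e_le_one j
  rw [← h]; nlinarith

lemma hh_anti (φ : Pt → ℝ × ℝ) (j : ℕ) {G G' : Set Pt} (hG : Adm G) (hG' : Adm G')
    (hs : G ⊆ G') : hh φ j G' ≤ hh φ j G := by
  obtain ⟨v, hv, h⟩ := hh_att φ j hG
  rw [← h]; exact hh_le hG' (hs hv)

lemma g_mono (j : ℕ) {a b : ℝ} (ha : 0 ≤ a) (hab : a ≤ b) : g j a ≤ g j b := by
  have := e_pos j
  have hb := ha.trans hab
  unfold g; gcongr

lemma g_nonneg (j : ℕ) {a : ℝ} (ha : 0 ≤ a) : 0 ≤ g j a := by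
  have := e_pos j
  unfold g; positivity

lemma g_half (j : ℕ) {a : ℝ} (ha : 0 ≤ a) : g j (a / 2) ≤ g j a / 8 := by
  have := e_pos j
  have h : min (e j) (a / 2) ≤ min (e j) a := min_le_min le_rfl (by linarith)
  unfold g
  calc (a / 2) ^ 3 * min (e j) (a / 2) ≤ (a / 2) ^ 3 * min (e j) a := by gcongr
    _ = _ := by ring

lemma g_le (j : ℕ) {a : ℝ} (ha : 0 ≤ a) (h2 : a ≤ 2) : g j a ≤ 8 * e j := by
  have := e_pos j
  unfold g
  calc a ^ 3 * min (e j) a ≤ 2 ^ 3 * e j := by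
        gcongr; exact min_le_left _ _
    _ = _ := by ring

lemma pref_iff {φ : Pt → ℝ × ℝ} (hφ : Good φ) (v w₁ w₂ : Pt) :
    dist v w₁ ≤ dist v w₂ ↔
    ((φ w₁).1 - (φ w₂).1) * (((φ w₁).1 + (φ w₂).1) / 2) +
      ((φ w₁).2 - (φ w₂).2) * (((φ w₁).2 + (φ w₂).2) / 2) ≤
    ((φ w₁).1 - (φ w₂).1) * (φ v).1 + ((φ w₁).2 - (φ w₂).2) * (φ v).2 := by
  rw [← sq_le_sq₀ dist_nonneg dist_nonneg, hφ.dst, hφ.dst]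
  constructor <;> intro h <;> nlinarith

lemma slot {J : ℕ} {x y : ℝ} (h0 : y ≤ x) (h1 : e J * x < y) :
    ∃ j < J, y ≤ e j * x ∧ e j * x / 2 < y := by
  induction J with
  | zero => simp [e] at h1; linarith
  | succ n ih =>
    by_cases h : e n * x < y
    · obtain ⟨j, hj, h⟩ := ih h
      exact ⟨j, by omega, h⟩
    · refine ⟨n, by omega, not_lt.mp h, ?_⟩
      rw [e_succ] at h1; linarith

lemma acc_cover (J : ℕ) {G : Set Pt} (hG : Adm G) {w₁ w₂ : Pt} (hw₁ : w₁ ∈ unitSquare)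
    (hw₂ : w₂ ∈ unitSquare) (hacc : Accepts G w₁ w₂) :
    ∃ σ, (cs σ w₁, cs σ w₂) ∈ Tl J ∨ ∃ j < J, (cs σ w₁, cs σ w₂) ∈ U j (hh (cs σ) j G) := by
  obtain ⟨σ, h0, h1⟩ := octant w₁ w₂
  refine ⟨σ, ?_⟩
  have hφ := cs_good σ
  obtain ⟨a1, b1, c1, d1⟩ := hφ.mem _ hw₁
  obtain ⟨a2, b2, c2, d2⟩ := hφ.mem _ hw₂
  by_cases ht : (cs σ w₁).2 - (cs σ w₂).2 ≤ e J * ((cs σ w₁).1 - (cs σ w₂).1)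
  · left
    have := e_pos J
    refine ⟨?_, ?_⟩ <;> simp only <;> nlinarith
  right
  obtain ⟨j, hj, h2, h3⟩ := slot h1 (not_le.mp ht)
  refine ⟨j, hj, ?_⟩
  unfold U
  rw [mem_ofPred_eq]
  obtain ⟨v, hv, hvh⟩ := hh_att (cs σ) j hG
  have hp := (pref_iff hφ v w₁ w₂).1 (hacc v hv)
  obtain ⟨av, bv, cv, dv⟩ := hφ.mem _ (hG.sub hv)
  have he := e_pos j
  have he1 := e_le_one j
  generalize hh (cs σ) j G = h at *
  generalize e j = ε at *
  generalize (cs σ w₁) = p at *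
  generalize (cs σ w₂) = q at *
  generalize (cs σ v) = z at *
  obtain ⟨p1, p2⟩ := p
  obtain ⟨q1, q2⟩ := q
  obtain ⟨z1, z2⟩ := z
  simp only at *
  have hn : 0 < p1 - q1 := by
    by_contra hcon
    have : p1 - q1 = 0 := by linarith
    rw [this] at h2 h3; linarith
  set n := p1 - q1 with hn_def
  set n' := p2 - q2 with hn'_def
  have k1 : n * ((p1 + q1) / 2) + n' * ((p2 + q2) / 2) ≤ n * h := by
    calc _ ≤ n * z1 + n' * z2 := hp
      _ ≤ n * z1 + ε * n * z2 := by gcongr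
      _ = n * h := by rw [← hvh]; ring
  have k2 : (p1 + q1) / 2 ≤ h := by
    have : n * ((p1 + q1) / 2) ≤ n * h := by nlinarith [mul_nonneg h0 c1, mul_nonneg h0 c2]
    exact le_of_mul_le_mul_left this hn
  have k3 : ε / 2 * ((p2 + q2) / 2) ≤ h := by
    have : n * (ε / 2 * ((p2 + q2) / 2)) ≤ n * h := by
      have : (ε * n / 2) * ((p2 + q2) / 2) ≤ n' * ((p2 + q2) / 2) :=
        mul_le_mul_of_nonneg_right h3.le (by linarith)
      have : 0 ≤ n * ((p1 + q1) / 2) := by positivity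
      linarith
    exact le_of_mul_le_mul_left this hn
  refine ⟨?_, ?_, ?_, ?_, ?_⟩
  · linarith
  · linarith
  · nlinarith
  · have : ε * n ≤ ε * (2 * h) := by gcongr; linarith
    linarith
  · linarith

lemma Bu_acc {φ : Pt → ℝ × ℝ} (hφ : Good φ) (j : ℕ) {G : Set Pt} (hG : Adm G) {w₁ w₂ : Pt}
    (hB : (φ w₁, φ w₂) ∈ Bu j (hh φ j G)) :
    Accepts G w₁ w₂ ∧ (φ w₁).1 + e j * (φ w₁).2 ≤ hh φ j G / 2 := by
  simp only [Bu, mem_iUnion, Finset.mem_range] at hB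
  obtain ⟨i, hi, hB⟩ := hB
  have h0 := hh_nonneg hφ j hG
  have heij := e_anti (Nat.lt_succ_iff.mp hi)
  have hej := e_pos j
  have he := e_pos i
  have he1 := e_le_one i
  obtain ⟨c1, c2, c3, c4, c5, c6, c7, c8, c9⟩ := hB
  have key : ∀ v ∈ G, hh φ j G ≤ (φ v).1 + e j * (φ v).2 := fun v hv => hh_le hG hv
  generalize hh φ j G = h at *
  simp only at c1 c2 c3 c4 c5 c6 c7 c8 c9
  have hb : 0 ≤ (φ w₁).2 := by nlinarith [mul_nonneg he.le h0]
  constructor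
  · intro v hv
    rw [pref_iff hφ]
    obtain ⟨av, bv, cv, dv⟩ := hφ.mem _ (hG.sub hv)
    have k := key v hv
    generalize e j = δ at *
    generalize e i = ε at *
    generalize (φ w₁) = p at *
    generalize (φ w₂) = q at *
    generalize (φ v) = z at *
    obtain ⟨p1, p2⟩ := p
    obtain ⟨q1, q2⟩ := q
    obtain ⟨z1, z2⟩ := z
    simp only at *
    have hn1 : 4 * h / 32 ≤ p1 - q1 := by linarith
    have hn2 : p1 - q1 ≤ 6 * h / 32 := by linarith
    have hm1 : 3 * ε * h / 32 ≤ p2 - q2 := by linarith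
    have hm2 : p2 - q2 ≤ 4 * ε * h / 32 := by linarith
    have hεh : 0 ≤ ε * h := by positivity
    have hlow : (p1 - q1) * (h / 2) ≤ (p1 - q1) * z1 + (p2 - q2) * z2 := by
      have t1 : (p1 - q1) * (δ / 2) ≤ p2 - q2 := by
        calc (p1 - q1) * (δ / 2) ≤ (6 * h / 32) * (ε / 2) := by
              apply mul_le_mul hn2 (by linarith) (by positivity) (by positivity)
          _ ≤ p2 - q2 := by linarith
      have t2 : (p1 - q1) * (δ / 2) * z2 ≤ (p2 - q2) * z2 :=
        mul_le_mul_of_nonneg_right t1 cv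
      have t3 : (p1 - q1) * h ≤ (p1 - q1) * (z1 + δ * z2) :=
        mul_le_mul_of_nonneg_left k (by linarith)
      have t4 : 0 ≤ (p1 - q1) * z1 := mul_nonneg (by linarith) av
      nlinarith
    refine le_trans ?_ hlow
    have s1 : (p1 - q1) * ((p1 + q1) / 2) ≤ (p1 - q1) * (6 * h / 32) :=
      mul_le_mul_of_nonneg_left (by linarith) (by linarith)
    have s2 : (p2 - q2) * ((p2 + q2) / 2) ≤ (4 * ε * h / 32) * (q2 + 2 * ε * h / 32) :=
      mul_le_mul hm2 (by linarith) (by linarith) (by positivity)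
    have s3 : (4 * ε * h / 32) * (q2 + 2 * ε * h / 32) ≤ (4 * h / 32) * (3 * h / 32) := by
      have : ε * (q2 + 2 * ε * h / 32) ≤ 3 * h / 32 := by
        have : ε * ε ≤ 1 := by nlinarith
        have : ε * ε * h ≤ 1 * h := mul_le_mul_of_nonneg_right this h0
        nlinarith
      calc (4 * ε * h / 32) * (q2 + 2 * ε * h / 32)
          = (4 * h / 32) * (ε * (q2 + 2 * ε * h / 32)) := by ring
        _ ≤ _ := by gcongr
    have s4 : (4 * h / 32) * (3 * h / 32) ≤ (p1 - q1) * (3 * h / 32) := by gcongr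
    have s5 : 0 ≤ (p1 - q1) * h := mul_nonneg (by linarith) h0
    nlinarith
  · have t1 : e j * (φ w₁).2 ≤ e i * (φ w₁).2 := by gcongr
    have t2 : e i * (φ w₁).2 ≤ e i * ((φ w₂).2 + 4 * e i * h / 32) := by gcongr
    have t3 : e i * e i ≤ 1 := by nlinarith
    have t4 : e i * e i * h ≤ 1 * h := mul_le_mul_of_nonneg_right t3 h0
    nlinarith

/-- The potential mass. -/
def MM (J : ℕ) (G : Set Pt) : ℝ :=
  ∑ σ : Bool × Bool × Bool, ∑ j ∈ Finset.range J, g j (hh (cs σ) j G)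

/-- The indicator of a set of coordinate pairs. -/
def ind (S : Set ((ℝ × ℝ) × (ℝ × ℝ))) (σ : Bool × Bool × Bool) (w₁ w₂ : Pt) : ℝ :=
  S.indicator (fun _ => (1 : ℝ)) (cs σ w₁, cs σ w₂)

lemma ind_nonneg (S σ w₁ w₂) : 0 ≤ ind S σ w₁ w₂ := by
  unfold ind; exact indicator_nonneg (by simp) _

lemma step_sup (G : Set Pt) (c : Pt × Pt) : G ⊆ step G c := by
  unfold step; split_ifs <;> simp

lemma step_adm {G : Set Pt} (hG : Adm G) {c : Pt × Pt} (h1 : c.1 ∈ unitSquare)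
    (h2 : c.2 ∈ unitSquare) : Adm (step G c) := by
  refine ⟨?_, hG.ne.mono (step_sup G c), ?_⟩
  · unfold step; split_ifs
    · exact hG.fin.insert _
    · exact hG.fin.insert _
    · exact hG.fin
  · unfold step; split_ifs
    · exact insert_subset h1 hG.sub
    · exact insert_subset h2 hG.sub
    · exact hG.sub

lemma acc_ind (J : ℕ) {G : Set Pt} (hG : Adm G) {w₁ w₂ : Pt} (hw₁ : w₁ ∈ unitSquare)
    (hw₂ : w₂ ∈ unitSquare) (hacc : Accepts G w₁ w₂) :
    1 ≤ ∑ σ : Bool × Bool × Bool, (ind (Tl J) σ w₁ w₂ +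
      ∑ j ∈ Finset.range J, ind (U j (hh (cs σ) j G)) σ w₁ w₂) := by
  obtain ⟨σ, h⟩ := acc_cover J hG hw₁ hw₂ hacc
  have hnn : ∀ σ, 0 ≤ ∑ j ∈ Finset.range J, ind (U j (hh (cs σ) j G)) σ w₁ w₂ :=
    fun σ => Finset.sum_nonneg fun j _ => ind_nonneg _ _ _ _
  refine le_trans ?_ (Finset.single_le_sum (f := fun σ => (ind (Tl J) σ w₁ w₂ +
      ∑ j ∈ Finset.range J, ind (U j (hh (cs σ) j G)) σ w₁ w₂))
      (fun σ _ => add_nonneg (ind_nonneg _ _ _ _) (hnn σ)) (Finset.mem_univ σ))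
  rcases h with h | ⟨j, hj, h⟩
  · have : ind (Tl J) σ w₁ w₂ = 1 := by simp [ind, h]
    have := hnn σ
    linarith
  · have h1 : ind (U j (hh (cs σ) j G)) σ w₁ w₂ = 1 := by simp [ind, h]
    have h2 := Finset.single_le_sum (f := fun j => ind (U j (hh (cs σ) j G)) σ w₁ w₂)
      (fun j _ => ind_nonneg _ _ _ _) (Finset.mem_range.mpr hj)
    have := ind_nonneg (Tl J) σ w₁ w₂
    linarith

lemma card_step (J : ℕ) {G : Set Pt} (hG : Adm G) {c : Pt × Pt} (h1 : c.1 ∈ unitSquare)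
    (h2 : c.2 ∈ unitSquare) :
    ((step G c).ncard : ℝ) ≤ G.ncard +
      ((∑ σ : Bool × Bool × Bool, (ind (Tl J) σ c.1 c.2 +
        ∑ j ∈ Finset.range J, ind (U j (hh (cs σ) j G)) σ c.1 c.2)) +
      (∑ σ : Bool × Bool × Bool, (ind (Tl J) σ c.2 c.1 +
        ∑ j ∈ Finset.range J, ind (U j (hh (cs σ) j G)) σ c.2 c.1))) := by
  have hnn : ∀ w₁ w₂, 0 ≤ ∑ σ : Bool × Bool × Bool, (ind (Tl J) σ w₁ w₂ +
      ∑ j ∈ Finset.range J, ind (U j (hh (cs σ) j G)) σ w₁ w₂) := fun w₁ w₂ =>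
    Finset.sum_nonneg fun σ _ => add_nonneg (ind_nonneg _ _ _ _)
      (Finset.sum_nonneg fun j _ => ind_nonneg _ _ _ _)
  have n1 := hnn c.1 c.2
  have n2 := hnn c.2 c.1
  have hin : ∀ w, ((insert w G).ncard : ℝ) ≤ G.ncard + 1 := fun w => by
    exact_mod_cast ncard_insert_le w G
  unfold step; split_ifs with ha hb
  · have := acc_ind J hG h1 h2 ha
    have := hin c.1
    linarith
  · have := acc_ind J hG h2 h1 hb
    have := hin c.2
    linarith
  · linarith

lemma MM_step (J : ℕ) {G : Set Pt} (hG : Adm G) {c : Pt × Pt} (h1 : c.1 ∈ unitSquare)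
    (h2 : c.2 ∈ unitSquare) :
    MM J (step G c) ≤ MM J G - ∑ σ : Bool × Bool × Bool, ∑ j ∈ Finset.range J,
      7 / 8 * g j (hh (cs σ) j G) * ind (Bu j (hh (cs σ) j G)) σ c.1 c.2 := by
  unfold MM
  rw [← Finset.sum_sub_distrib]
  apply Finset.sum_le_sum
  intro σ _
  rw [← Finset.sum_sub_distrib]
  apply Finset.sum_le_sum
  intro j _
  have hφ := cs_good σ
  have hS := step_adm hG h1 h2
  by_cases hB : (cs σ c.1, cs σ c.2) ∈ Bu j (hh (cs σ) j G)
  · obtain ⟨ha, hb⟩ := Bu_acc hφ j hG hB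
    have hmem : c.1 ∈ step G c := by unfold step; rw [if_pos ha]; simp
    have h3 := (hh_le (φ := cs σ) (j := j) hS hmem).trans hb
    have h4 := g_mono j (hh_nonneg hφ j hS) h3
    have h5 := g_half j (hh_nonneg hφ j hG)
    have h6 : ind (Bu j (hh (cs σ) j G)) σ c.1 c.2 = 1 := by simp [ind, hB]
    rw [h6]; linarith
  · have h6 : ind (Bu j (hh (cs σ) j G)) σ c.1 c.2 = 0 := by simp [ind, hB]
    rw [h6]
    have := g_mono j (hh_nonneg hφ j hS) (hh_anti (cs σ) j hG hS (step_sup G c))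
    linarith

/-- The uniform law on the square. -/
abbrev mu : Measure Pt := volume.restrict unitSquare

instance mu_prob : IsProbabilityMeasure mu := by
  have h := (cs_good (false, false, false)).mp
  constructor
  have := h.measure_preimage (s := univ) MeasurableSet.univ.nullMeasurableSet
  simpa using this

lemma ae_mu : ∀ᵐ p ∂mu, p ∈ unitSquare := by
  apply ae_restrict_mem
  have : unitSquare = (fun p : Pt => (p 0, p 1)) ⁻¹' (Icc (0:ℝ) 1 ×ˢ Icc (0:ℝ) 1) := by
    ext p; simp [unitSquare, Fin.forall_fin_two]; tauto
  rw [this]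
  exact (measurableSet_Icc.prod measurableSet_Icc).preimage (by fun_prop)

lemma ae_mu2 : ∀ᵐ c ∂(mu.prod mu), c.1 ∈ unitSquare ∧ c.2 ∈ unitSquare := by
  have h1 : ∀ᵐ c ∂(mu.prod mu), c.1 ∈ unitSquare :=
    Measure.quasiMeasurePreserving_fst.ae ae_mu
  have h2 : ∀ᵐ c ∂(mu.prod mu), c.2 ∈ unitSquare :=
    Measure.quasiMeasurePreserving_snd.ae ae_mu
  filter_upwards [h1, h2] with c a b using ⟨a, b⟩

lemma mp_pair (σ : Bool × Bool × Bool) : MeasurePreserving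
    (fun c : Pt × Pt => (cs σ c.1, cs σ c.2)) (mu.prod mu) (nu.prod nu) :=
  (cs_good σ).mp.prod (cs_good σ).mp

lemma mp_pair' (σ : Bool × Bool × Bool) : MeasurePreserving
    (fun c : Pt × Pt => (cs σ c.2, cs σ c.1)) (mu.prod mu) (nu.prod nu) :=
  (mp_pair σ).comp (Measure.measurePreserving_swap (μ := mu) (ν := mu))

lemma ind_integrable {S : Set ((ℝ × ℝ) × (ℝ × ℝ))} (hS : MeasurableSet S)
    (σ : Bool × Bool × Bool) : Integrable (fun c : Pt × Pt => ind S σ c.1 c.2) (mu.prod mu) :=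
  (mp_pair σ).integrable_comp_of_integrable ((integrable_const (1:ℝ)).indicator hS)

lemma ind_integrable' {S : Set ((ℝ × ℝ) × (ℝ × ℝ))} (hS : MeasurableSet S)
    (σ : Bool × Bool × Bool) : Integrable (fun c : Pt × Pt => ind S σ c.2 c.1) (mu.prod mu) :=
  (mp_pair' σ).integrable_comp_of_integrable ((integrable_const (1:ℝ)).indicator hS)

lemma ind_integral {S : Set ((ℝ × ℝ) × (ℝ × ℝ))} (hS : MeasurableSet S)
    (σ : Bool × Bool × Bool) : ∫ c : Pt × Pt, ind S σ c.1 c.2 ∂(mu.prod mu) =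
      (nu.prod nu).real S := by
  have h : (fun c : Pt × Pt => ind S σ c.1 c.2) =
      ((fun c : Pt × Pt => (cs σ c.1, cs σ c.2)) ⁻¹' S).indicator (fun _ => (1:ℝ)) := by
    ext c; rfl
  rw [h, integral_indicator (hS.preimage (mp_pair σ).measurable)]
  simp [Measure.real, (mp_pair σ).measure_preimage hS.nullMeasurableSet]

lemma ind_integral' {S : Set ((ℝ × ℝ) × (ℝ × ℝ))} (hS : MeasurableSet S)
    (σ : Bool × Bool × Bool) : ∫ c : Pt × Pt, ind S σ c.2 c.1 ∂(mu.prod mu) =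
      (nu.prod nu).real S := by
  have h : (fun c : Pt × Pt => ind S σ c.2 c.1) =
      ((fun c : Pt × Pt => (cs σ c.2, cs σ c.1)) ⁻¹' S).indicator (fun _ => (1:ℝ)) := by
    ext c; rfl
  rw [h, integral_indicator (hS.preimage (mp_pair' σ).measurable)]
  simp [Measure.real, (mp_pair' σ).measure_preimage hS.nullMeasurableSet]

/-- Harmonic numbers. -/
def HJ (J : ℕ) : ℝ := ∑ j ∈ Finset.range J, 1 / ((j : ℝ) + 1)

lemma HJ_nonneg (J : ℕ) : 0 ≤ HJ J := Finset.sum_nonneg fun j _ => by positivity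

/-- The numerical constant. -/
def K0 : ℝ := 64 * 8 * (8 / 7) * 32 ^ 4

/-- The potential. -/
def PP (J : ℕ) (T : ℝ) (G : Set Pt) : ℝ :=
  G.ncard + K0 * HJ J * Real.log (1 + T * MM J G)

lemma MM_nonneg (J : ℕ) {G : Set Pt} (hG : Adm G) : 0 ≤ MM J G :=
  Finset.sum_nonneg fun σ _ => Finset.sum_nonneg fun j _ =>
    g_nonneg j (hh_nonneg (cs_good σ) j hG)

lemma CS (J : ℕ) (G : Set Pt) : MM J G ^ 2 ≤
    8 * HJ J * ∑ σ : Bool × Bool × Bool, ∑ j ∈ Finset.range J,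
      ((j : ℝ) + 1) * g j (hh (cs σ) j G) ^ 2 := by
  have key : ∀ σ, (∑ j ∈ Finset.range J, g j (hh (cs σ) j G)) ^ 2 ≤
      HJ J * ∑ j ∈ Finset.range J, ((j : ℝ) + 1) * g j (hh (cs σ) j G) ^ 2 := by
    intro σ
    unfold HJ
    apply Finset.sum_sq_le_sum_mul_sum_of_sq_le_mul
    · intro j _; positivity
    · intro j _; positivity
    · intro j _
      have : (j : ℝ) + 1 ≠ 0 := by positivity
      apply le_of_eq; field_simp
  calc MM J G ^ 2 ≤ (Finset.univ : Finset (Bool × Bool × Bool)).card *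
        ∑ σ : Bool × Bool × Bool, (∑ j ∈ Finset.range J, g j (hh (cs σ) j G)) ^ 2 :=
        sq_sum_le_card_mul_sum_sq
    _ = 8 * ∑ σ : Bool × Bool × Bool, (∑ j ∈ Finset.range J, g j (hh (cs σ) j G)) ^ 2 := by
        norm_num
    _ ≤ 8 * ∑ σ : Bool × Bool × Bool,
        HJ J * ∑ j ∈ Finset.range J, ((j : ℝ) + 1) * g j (hh (cs σ) j G) ^ 2 := by
        gcongr with σ; exact key σ
    _ = _ := by rw [← Finset.mul_sum]; ring

lemma PP_step (J : ℕ) {T : ℝ} (hT : 0 < T) {G : Set Pt} (hG : Adm G) {c : Pt × Pt}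
    (h1 : c.1 ∈ unitSquare) (h2 : c.2 ∈ unitSquare) :
    PP J T (step G c) ≤ PP J T G + ((∑ σ : Bool × Bool × Bool, (ind (Tl J) σ c.1 c.2 +
        ∑ j ∈ Finset.range J, ind (U j (hh (cs σ) j G)) σ c.1 c.2)) +
      (∑ σ : Bool × Bool × Bool, (ind (Tl J) σ c.2 c.1 +
        ∑ j ∈ Finset.range J, ind (U j (hh (cs σ) j G)) σ c.2 c.1))) -
      K0 * HJ J * (T / (1 + T * MM J G)) * ∑ σ : Bool × Bool × Bool, ∑ j ∈ Finset.range J,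
      7 / 8 * g j (hh (cs σ) j G) * ind (Bu j (hh (cs σ) j G)) σ c.1 c.2 := by
  have a1 := card_step J hG h1 h2
  have a2 := MM_step J hG h1 h2
  have m0 := MM_nonneg J hG
  have m1 := MM_nonneg J (step_adm hG h1 h2)
  have hH := HJ_nonneg J
  have hK : 0 ≤ K0 * HJ J := mul_nonneg (by norm_num [K0]) hH
  set D := ∑ σ : Bool × Bool × Bool, ∑ j ∈ Finset.range J,
      7 / 8 * g j (hh (cs σ) j G) * ind (Bu j (hh (cs σ) j G)) σ c.1 c.2
  have hx : 0 < 1 + T * MM J G := by positivity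
  have hy : 0 < 1 + T * MM J (step G c) := by positivity
  have hlog : Real.log (1 + T * MM J (step G c)) ≤ Real.log (1 + T * MM J G) -
      T / (1 + T * MM J G) * D := by
    have := Real.log_le_sub_one_of_pos (div_pos hy hx)
    rw [Real.log_div hy.ne' hx.ne'] at this
    have h3 : (1 + T * MM J (step G c)) / (1 + T * MM J G) - 1 ≤ - (T / (1 + T * MM J G) * D) := by
      rw [div_sub_one hx.ne', div_mul_eq_mul_div, ← neg_div]
      gcongr
      nlinarith
    linarith
  have := mul_le_mul_of_nonneg_left hlog hK
  unfold PP
  linarith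

lemma one_step (J : ℕ) {T : ℝ} (hT : 0 < T) (hJ : e J ≤ 1 / T) {G : Set Pt} (hG : Adm G) :
    ∫⁻ c, ENNReal.ofReal (PP J T (step G c)) ∂(mu.prod mu) ≤
      ENNReal.ofReal (PP J T G + 80 / T) := by
  have hH := HJ_nonneg J
  have hK : 0 ≤ K0 * HJ J := mul_nonneg (by norm_num [K0]) hH
  have m0 := MM_nonneg J hG
  have hx : 0 < 1 + T * MM J G := by positivity
  set R1 : Pt × Pt → ℝ := fun c => ∑ σ : Bool × Bool × Bool, (ind (Tl J) σ c.1 c.2 +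
        ∑ j ∈ Finset.range J, ind (U j (hh (cs σ) j G)) σ c.1 c.2) with hR1
  set R2 : Pt × Pt → ℝ := fun c => ∑ σ : Bool × Bool × Bool, (ind (Tl J) σ c.2 c.1 +
        ∑ j ∈ Finset.range J, ind (U j (hh (cs σ) j G)) σ c.2 c.1) with hR2
  set R3 : Pt × Pt → ℝ := fun c => ∑ σ : Bool × Bool × Bool, ∑ j ∈ Finset.range J,
      7 / 8 * g j (hh (cs σ) j G) * ind (Bu j (hh (cs σ) j G)) σ c.1 c.2 with hR3
  have i1 : Integrable R1 (mu.prod mu) := integrable_finsetSum _ fun σ _ =>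
    (ind_integrable (meas_Tl J) σ).add (integrable_finsetSum _ fun j _ =>
      ind_integrable (meas_U j _) σ)
  have i2 : Integrable R2 (mu.prod mu) := integrable_finsetSum _ fun σ _ =>
    (ind_integrable' (meas_Tl J) σ).add (integrable_finsetSum _ fun j _ =>
      ind_integrable' (meas_U j _) σ)
  have i3 : Integrable R3 (mu.prod mu) := integrable_finsetSum _ fun σ _ =>
    (integrable_finsetSum _ fun j _ => (ind_integrable (meas_Bu j _) σ).const_mul _)
  have bound : ∑ σ : Bool × Bool × Bool, ((nu.prod nu).real (Tl J) +
      ∑ j ∈ Finset.range J, (nu.prod nu).real (U j (hh (cs σ) j G))) ≤ 8 / T + 32 * MM J G := by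
    calc _ ≤ ∑ σ : Bool × Bool × Bool, (1 / T +
          ∑ j ∈ Finset.range J, 32 * g j (hh (cs σ) j G)) := by
          gcongr with σ _ j _
          · exact (Tl_le J).trans hJ
          · exact U_le j (hh_nonneg (cs_good σ) j hG)
      _ = _ := by
          rw [Finset.sum_add_distrib]
          simp only [← Finset.mul_sum, MM]
          simp; ring
  have e1 : ∫ c, R1 c ∂(mu.prod mu) ≤ 8 / T + 32 * MM J G := by
    refine le_trans (le_of_eq ?_) bound
    have iσ : ∀ σ ∈ (Finset.univ : Finset (Bool × Bool × Bool)),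
        Integrable (fun c : Pt × Pt => ind (Tl J) σ c.1 c.2 +
        ∑ j ∈ Finset.range J, ind (U j (hh (cs σ) j G)) σ c.1 c.2) (mu.prod mu) := fun σ _ =>
      (ind_integrable (meas_Tl J) σ).add
      (integrable_finsetSum _ fun j _ => ind_integrable (meas_U j _) σ)
    refine (integral_finsetSum _ iσ).trans ?_
    refine Finset.sum_congr rfl fun σ _ => ?_
    rw [integral_add (ind_integrable (meas_Tl J) σ)
      (integrable_finsetSum _ fun j _ => ind_integrable (meas_U j _) σ),
      integral_finsetSum _ fun j _ => ind_integrable (meas_U j _) σ, ind_integral (meas_Tl J)]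
    congr 1
    exact Finset.sum_congr rfl fun j _ => ind_integral (meas_U j _) σ
  have e2 : ∫ c, R2 c ∂(mu.prod mu) ≤ 8 / T + 32 * MM J G := by
    refine le_trans (le_of_eq ?_) bound
    have iσ : ∀ σ ∈ (Finset.univ : Finset (Bool × Bool × Bool)),
        Integrable (fun c : Pt × Pt => ind (Tl J) σ c.2 c.1 +
        ∑ j ∈ Finset.range J, ind (U j (hh (cs σ) j G)) σ c.2 c.1) (mu.prod mu) := fun σ _ =>
      (ind_integrable' (meas_Tl J) σ).add
      (integrable_finsetSum _ fun j _ => ind_integrable' (meas_U j _) σ)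
    refine (integral_finsetSum _ iσ).trans ?_
    refine Finset.sum_congr rfl fun σ _ => ?_
    rw [integral_add (ind_integrable' (meas_Tl J) σ)
      (integrable_finsetSum _ fun j _ => ind_integrable' (meas_U j _) σ),
      integral_finsetSum _ fun j _ => ind_integrable' (meas_U j _) σ, ind_integral' (meas_Tl J)]
    congr 1
    exact Finset.sum_congr rfl fun j _ => ind_integral' (meas_U j _) σ
  have e3 : 7 / 8 * (1 / 32) ^ 4 * ∑ σ : Bool × Bool × Bool, ∑ j ∈ Finset.range J,
      ((j : ℝ) + 1) * g j (hh (cs σ) j G) ^ 2 ≤ ∫ c, R3 c ∂(mu.prod mu) := by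
    rw [hR3, integral_finsetSum _ fun σ _ => integrable_finsetSum _ fun j _ =>
      (ind_integrable (meas_Bu j _) σ).const_mul _, Finset.mul_sum]
    refine Finset.sum_le_sum fun σ _ => ?_
    rw [integral_finsetSum _ fun j _ => (ind_integrable (meas_Bu j _) σ).const_mul _,
      Finset.mul_sum]
    refine Finset.sum_le_sum fun j _ => ?_
    rw [integral_const_mul, ind_integral (meas_Bu j _)]
    have h0 := hh_nonneg (cs_good σ) j hG
    have := Bu_ge j h0 (hh_le_two (cs_good σ) j hG)
    have := mul_le_mul_of_nonneg_left this (g_nonneg j h0)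
    linarith
  have cs' := CS J G
  set Q := ∑ σ : Bool × Bool × Bool, ∑ j ∈ Finset.range J,
      ((j : ℝ) + 1) * g j (hh (cs σ) j G) ^ 2
  have e4 : 64 * MM J G - 64 / T ≤
      K0 * HJ J * (T / (1 + T * MM J G)) * ∫ c, R3 c ∂(mu.prod mu) := by
    calc 64 * MM J G - 64 / T ≤ T / (1 + T * MM J G) * (64 * MM J G ^ 2) := by
          rw [div_mul_eq_mul_div, le_div_iff₀ hx]
          have : (64 * MM J G - 64 / T) * (1 + T * MM J G) =
            64 * T * MM J G ^ 2 - 64 / T := by field_simp; ring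
          rw [this]
          have : 0 < 64 / T := by positivity
          linarith
      _ ≤ T / (1 + T * MM J G) * (64 * (8 * HJ J * Q)) := by gcongr
      _ = K0 * HJ J * (T / (1 + T * MM J G)) * (7 / 8 * (1 / 32) ^ 4 * Q) := by
          unfold K0; ring
      _ ≤ _ := by gcongr
  set R : Pt × Pt → ℝ := fun c => PP J T G + (R1 c + R2 c) -
    K0 * HJ J * (T / (1 + T * MM J G)) * R3 c with hR
  have iR : Integrable R (mu.prod mu) :=
    ((integrable_const _).add (i1.add i2)).sub (i3.const_mul _)
  have hae : ∀ᵐ c ∂(mu.prod mu), PP J T (step G c) ≤ R c ∧ 0 ≤ R c := by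
    filter_upwards [ae_mu2] with c hc
    have h1 := PP_step J hT hG hc.1 hc.2
    refine ⟨h1, le_trans ?_ h1⟩
    have := MM_nonneg J (step_adm hG hc.1 hc.2)
    unfold PP
    have := Real.log_nonneg (x := 1 + T * MM J (step G c)) (by nlinarith)
    positivity
  calc _ ≤ ∫⁻ c, ENNReal.ofReal (R c) ∂(mu.prod mu) :=
        lintegral_mono_ae (hae.mono fun c hc => ENNReal.ofReal_le_ofReal hc.1)
    _ = ENNReal.ofReal (∫ c, R c ∂(mu.prod mu)) :=
        (ofReal_integral_eq_lintegral_ofReal iR (hae.mono fun c hc => hc.2)).symm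
    _ ≤ _ := by
        apply ENNReal.ofReal_le_ofReal
        have : ∫ c, R c ∂(mu.prod mu) = PP J T G + (∫ c, R1 c ∂(mu.prod mu) +
            ∫ c, R2 c ∂(mu.prod mu)) -
            K0 * HJ J * (T / (1 + T * MM J G)) * ∫ c, R3 c ∂(mu.prod mu) := by
          have ic : Integrable (fun c => R1 c + R2 c) (mu.prod mu) := i1.add i2
          have ia : Integrable (fun c => PP J T G + (R1 c + R2 c)) (mu.prod mu) :=
            (integrable_const _).add ic
          have ib : Integrable (fun c => K0 * HJ J * (T / (1 + T * MM J G)) * R3 c)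
            (mu.prod mu) := i3.const_mul _
          refine (integral_sub ia ib).trans ?_
          rw [integral_add (integrable_const _) ic, integral_add i1 i2, integral_const_mul]
          simp
        rw [this]
        have : (80:ℝ) / T = 16 / T + 64 / T := by ring
        have : (16:ℝ) / T = 8 / T + 8 / T := by ring
        linarith

/-- The process started from an arbitrary group. -/
def runFrom (G : Set Pt) (c : ℕ → Pt × Pt) : ℕ → Set Pt
  | 0 => G
  | t + 1 => step (runFrom G c t) (c t)

lemma grp_eq {k : ℕ} (init : Fin k → Pt) (c : ℕ → Pt × Pt) (t : ℕ) :
    grp init c t = runFrom (Set.range init) c t := by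
  induction t with
  | zero => rfl
  | succ n ih => simp only [grp, runFrom, ih]

lemma run_succ (G : Set Pt) (c : ℕ → Pt × Pt) (t : ℕ) :
    runFrom G c (t + 1) = runFrom (step G (c 0)) (fun n => c (n + 1)) t := by
  induction t with
  | zero => rfl
  | succ n ih =>
    rw [runFrom, ih]
    rfl

lemma run_congr (G : Set Pt) (c c' : ℕ → Pt × Pt) (t : ℕ) (h : ∀ n < t, c n = c' n) :
    runFrom G c t = runFrom G c' t := by
  induction t with
  | zero => rfl
  | succ n ih =>
    rw [runFrom, runFrom, ih fun m hm => h m (by omega), h n (by omega)]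

lemma lintegral_prod_le_any {α β : Type*} [MeasurableSpace α] [MeasurableSpace β]
    (μ : Measure α) (ν : Measure β) [SFinite ν] (f : α × β → ℝ≥0∞) :
    ∫⁻ z, f z ∂(μ.prod ν) ≤ ∫⁻ x, ∫⁻ y, f (x, y) ∂ν ∂μ := by
  obtain ⟨g', hg, hle, heq⟩ := exists_measurable_le_lintegral_eq (μ.prod ν) f
  rw [heq, lintegral_prod _ hg.aemeasurable]
  exact lintegral_mono fun x => lintegral_mono fun y => hle _

lemma many_steps (J : ℕ) {T : ℝ} (hT : 0 < T) (hJ : e J ≤ 1 / T) (n : ℕ) :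
    ∀ {G : Set Pt}, Adm G →
    ∫⁻ c, ((runFrom G (extSeq c) n).ncard : ℝ≥0∞) ∂(Measure.pi fun _ : Fin n => mu.prod mu) ≤
      ENNReal.ofReal (PP J T G + n * (80 / T)) := by
  have hH := HJ_nonneg J
  have hK : 0 ≤ K0 * HJ J := mul_nonneg (by norm_num [K0]) hH
  have hlog : ∀ {G : Set Pt}, Adm G → 0 ≤ Real.log (1 + T * MM J G) := fun {G} hG => by
    have := MM_nonneg J hG
    exact Real.log_nonneg (by nlinarith)
  induction n with
  | zero =>
    intro G hG
    simp only [runFrom, lintegral_const, measure_univ, mul_one]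
    rw [← ENNReal.ofReal_natCast]
    apply ENNReal.ofReal_le_ofReal
    have := mul_nonneg hK (hlog hG)
    unfold PP; simp; linarith
  | succ n ih =>
    intro G hG
    have mp := measurePreserving_piFinSuccAbove (fun _ : Fin (n + 1) => mu.prod mu) 0
    have h1 : ∀ c : Fin (n + 1) → Pt × Pt, runFrom G (extSeq c) (n + 1) =
        runFrom (step G (c 0)) (extSeq (fun i : Fin n => c i.succ)) n := by
      intro c
      rw [run_succ]
      have : extSeq c 0 = c 0 := by simp [extSeq]
      rw [this]
      apply run_congr
      intro m hm
      simp [extSeq, hm]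
    have h2 : ∫⁻ c, ((runFrom G (extSeq c) (n + 1)).ncard : ℝ≥0∞)
        ∂(Measure.pi fun _ : Fin (n + 1) => mu.prod mu) =
        ∫⁻ z : (Pt × Pt) × (Fin n → Pt × Pt), ((runFrom (step G z.1) (extSeq z.2) n).ncard : ℝ≥0∞)
          ∂((mu.prod mu).prod (Measure.pi fun _ : Fin n => mu.prod mu)) := by
      rw [← mp.lintegral_comp_emb (MeasurableEquiv.measurableEmbedding _)]
      refine lintegral_congr fun c => ?_
      rw [h1]
      rfl
    rw [h2]
    refine (lintegral_prod_le_any _ _ _).trans ?_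
    calc _ ≤ ∫⁻ c, (ENNReal.ofReal (PP J T (step G c)) + ENNReal.ofReal (n * (80 / T)))
          ∂(mu.prod mu) := by
          apply lintegral_mono_ae
          filter_upwards [ae_mu2] with c hc
          have hS := step_adm hG hc.1 hc.2
          refine (ih hS).trans (le_of_eq (ENNReal.ofReal_add ?_ (by positivity)))
          have := hlog hS
          unfold PP; positivity
      _ = (∫⁻ c, ENNReal.ofReal (PP J T (step G c)) ∂(mu.prod mu)) +
          ENNReal.ofReal (n * (80 / T)) := by
          rw [lintegral_add_right _ measurable_const]; simp
      _ ≤ ENNReal.ofReal (PP J T G + 80 / T) + ENNReal.ofReal (n * (80 / T)) := by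
          gcongr; exact one_step J hT hJ hG
      _ = _ := by
          rw [← ENNReal.ofReal_add _ (by positivity)]
          · congr 1; push_cast; ring
          · have := hlog hG
            unfold PP; positivity

lemma MM_le (J : ℕ) {G : Set Pt} (hG : Adm G) : MM J G ≤ 128 := by
  have h : ∀ σ, ∑ j ∈ Finset.range J, g j (hh (cs σ) j G) ≤ 16 := by
    intro σ
    calc _ ≤ ∑ j ∈ Finset.range J, 8 * e j := Finset.sum_le_sum fun j _ =>
          g_le j (hh_nonneg (cs_good σ) j hG) (hh_le_two (cs_good σ) j hG)
      _ = 8 * ∑ j ∈ Finset.range J, (1 / 2 : ℝ) ^ j := by rw [Finset.mul_sum]; rfl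
      _ ≤ 8 * 2 := by gcongr; exact sum_geometric_two_le J
      _ = 16 := by norm_num
  calc MM J G ≤ ∑ σ : Bool × Bool × Bool, (16 : ℝ) := Finset.sum_le_sum fun σ _ => h σ
    _ = 128 := by norm_num

lemma HJ_le (J : ℕ) : HJ J ≤ 1 + Real.log J := by
  refine le_trans (le_of_eq ?_) (harmonic_le_one_add_log J)
  unfold HJ harmonic
  push_cast
  simp

lemma numeric (k T : ℕ) (hT : 3 ≤ T) :
    (k : ℝ) + K0 * HJ (Nat.log 2 T + 1) * Real.log (1 + T * 128) + T * (80 / T) ≤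
    ((k + 80) / Real.log (Real.log 3) +
      K0 * (1 + 3 / Real.log (Real.log 3)) * (1 + Real.log 129)) *
      Real.log T * Real.log (Real.log T) := by
  have hT' : (3:ℝ) ≤ T := by exact_mod_cast hT
  have hTp : (0:ℝ) < T := by linarith
  have l3 : 1 < Real.log 3 := by
    rw [Real.lt_log_iff_exp_lt (by norm_num)]; exact Real.exp_one_lt_three
  have l3' : Real.log 3 ≤ 2 := by
    have := Real.log_le_sub_one_of_pos (x := 3) (by norm_num); linarith
  have l0 : 0 < Real.log (Real.log 3) := Real.log_pos l3
  have lT : Real.log 3 ≤ Real.log T := Real.log_le_log (by norm_num) hT'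
  have llT : Real.log (Real.log 3) ≤ Real.log (Real.log T) := Real.log_le_log (by linarith) lT
  have lT1 : 1 ≤ Real.log T := by linarith
  have l129 : 0 ≤ Real.log 129 := Real.log_nonneg (by norm_num)
  set l := Real.log (Real.log 3)
  set L := Real.log T with hL
  set LL := Real.log L
  have hJ : ((Nat.log 2 T + 1 : ℕ) : ℝ) ≤ 3 * L := by
    have h1 : (2:ℝ) ^ (Nat.log 2 T) ≤ T := by exact_mod_cast Nat.pow_log_le_self 2 (by omega)
    have h2 := Real.log_le_log (by positivity) h1
    rw [Real.log_pow, ← hL] at h2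
    have h3 := Real.log_two_gt_d9
    have h4 : (Nat.log 2 T : ℝ) * 0.6931471803 ≤ (Nat.log 2 T : ℝ) * Real.log 2 := by gcongr
    push_cast
    linarith
  have hH : HJ (Nat.log 2 T + 1) ≤ (1 + 3 / l) * LL := by
    have h1 := HJ_le (Nat.log 2 T + 1)
    have h2 := Real.log_le_log (by positivity) hJ
    rw [Real.log_mul (by norm_num) (by linarith)] at h2
    have h3 : 3 ≤ 3 / l * LL := by
      rw [div_mul_eq_mul_div, le_div_iff₀ l0]; linarith
    have : Real.log L = LL := rfl
    linarith
  have hlog : Real.log (1 + T * 128) ≤ (1 + Real.log 129) * L := by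
    have : Real.log (1 + T * 128) ≤ Real.log (129 * T) :=
      Real.log_le_log (by positivity) (by linarith)
    rw [Real.log_mul (by norm_num) (by linarith)] at this
    nlinarith
  have hK : 0 < K0 := by norm_num [K0]
  have h0 : T * (80 / (T:ℝ)) = 80 := by field_simp
  have hH0 := HJ_nonneg (Nat.log 2 T + 1)
  have e1 : (k:ℝ) + 80 ≤ (k + 80) / l * L * LL := by
    have : (k + 80) / l * l = (k:ℝ) + 80 := div_mul_cancel₀ _ l0.ne'
    calc (k:ℝ) + 80 = (k + 80) / l * 1 * l := by rw [mul_one, this]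
      _ ≤ _ := by gcongr
  have e2 : K0 * HJ (Nat.log 2 T + 1) * Real.log (1 + T * 128) ≤
      K0 * ((1 + 3 / l) * LL) * ((1 + Real.log 129) * L) := by
    have hLL : 0 ≤ LL := by linarith
    gcongr
    exact Real.log_nonneg (by linarith)
  rw [h0]
  calc _ ≤ (k + 80) / l * L * LL + K0 * ((1 + 3 / l) * LL) * ((1 + Real.log 129) * L) := by linarith
    _ = _ := by ring

/-- For the consensus-voting group process on the unit square
`ℍ = [0,1]²` (with `k ≥ 1` uniform initial members and two i.i.d. uniform candidates per
round), there is a constant `C > 0` such that for every `T ≥ 3` the expected group size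
after `T` rounds satisfies `E[|G^T|] ≤ C · ln T · ln ln T`. -/
theorem expected_group_size_square_upper (k : ℕ) (hk : 1 ≤ k) :
    ∃ C : ℝ, 0 < C ∧ ∀ T : ℕ, 3 ≤ T →
      ∫⁻ ω, ((grp ω.1 (extSeq ω.2) T).ncard : ℝ≥0∞)
          ∂(procMeasure (volume.restrict unitSquare) k T)
        ≤ ENNReal.ofReal (C * Real.log T * Real.log (Real.log T)) := by
  refine ⟨(k + 80) / Real.log (Real.log 3) +
      K0 * (1 + 3 / Real.log (Real.log 3)) * (1 + Real.log 129), ?_, ?_⟩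
  · have l3 : 1 < Real.log 3 := by
      rw [Real.lt_log_iff_exp_lt (by norm_num)]; exact Real.exp_one_lt_three
    have l0 : 0 < Real.log (Real.log 3) := Real.log_pos l3
    have l129 : 0 ≤ Real.log 129 := Real.log_nonneg (by norm_num)
    have hK : 0 < K0 := by norm_num [K0]
    positivity
  intro T hT
  have hT' : (3:ℝ) ≤ T := by exact_mod_cast hT
  have hTp : (0:ℝ) < T := by linarith
  have hJ : e (Nat.log 2 T + 1) ≤ 1 / (T:ℝ) := by
    unfold e
    rw [div_pow, one_pow]
    apply one_div_le_one_div_of_le hTp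
    exact_mod_cast (Nat.lt_pow_succ_log_self (by norm_num) T).le
  have hae : ∀ᵐ init ∂(Measure.pi fun _ : Fin k => mu), ∀ i, init i ∈ unitSquare := by
    rw [ae_all_iff]
    intro i
    exact (Measure.quasiMeasurePreserving_eval (fun _ : Fin k => mu) i).ae ae_mu
  unfold procMeasure
  refine (lintegral_prod_le_any _ _ _).trans ?_
  calc _ ≤ ∫⁻ _init, ENNReal.ofReal (((k + 80) / Real.log (Real.log 3) +
      K0 * (1 + 3 / Real.log (Real.log 3)) * (1 + Real.log 129)) *
      Real.log T * Real.log (Real.log T)) ∂(Measure.pi fun _ : Fin k => mu) := by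
        apply lintegral_mono_ae
        filter_upwards [hae] with init hin
        have hA : Adm (Set.range init) := by
          refine ⟨Set.finite_range _, ⟨init ⟨0, hk⟩, Set.mem_range_self _⟩, ?_⟩
          rintro _ ⟨i, rfl⟩; exact hin i
        simp only [grp_eq]
        refine (many_steps (Nat.log 2 T + 1) hTp hJ T hA).trans (ENNReal.ofReal_le_ofReal ?_)
        refine le_trans ?_ (numeric k T hT)
        have hc : ((Set.range init).ncard : ℝ) ≤ k := by
          have : (Set.range init).ncard ≤ k := by
            rw [← Set.image_univ]
            refine (Set.ncard_image_le Set.finite_univ).trans ?_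
            simp [Set.ncard_univ]
          exact_mod_cast this
        have hK : 0 < K0 := by norm_num [K0]
        have hH0 := HJ_nonneg (Nat.log 2 T + 1)
        have hM := MM_le (Nat.log 2 T + 1) hA
        have hM0 := MM_nonneg (Nat.log 2 T + 1) hA
        unfold PP
        gcongr
    _ = _ := by simp

end
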